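/- Let H be the complete s-uniform t-partite hypergraph with sides V_1, …, V_t, and let I(H) be its edge ideal in R = K[x_v : v ∈ V]. Then the minimal number of generators of I(H) equals the height of I(H) plus 1 (i.e., R/I(H) is almost complete intersection) if and only if one of the following holds: (a) s = 2, t = 3 and |V_1| = |V_2| = |V_3| = 1 (H is the 3-cycle C_3); or (b) s = t, exactly one side has cardinality 2 and all other t−1 sides have cardinality 1 (H has exactly two edges, agreeing outside that side). -/

import Mathlib

/-!
A prime containing the edge ideal `I` of a hypergraph contains the variables of a vertex cover, and
the ideal generated by the variables in a set `C` is a prime of height `|C|`; so the height of `I`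
is the vertex cover number. When no edge contains another, the monomials of the edges are linearly
independent in `I / 𝔪I`, where `𝔪` is generated by the variables, so no generating set of `I` is
smaller. For the complete `s`-uniform `t`-partite hypergraph with sides of sizes `n_1, …, n_t` this
gives `∑_{|S| = s} ∏_{i ∈ S} n_i` generators and height `min_{|T| = t - s + 1} ∑_{i ∈ T} n_i`.

If the first number exceeds the second by one, comparing `∑_{i ∈ T} n_i` with the terms
`S = Tᶜ ∪ {i}`, `i ∈ T`, of the first sum yields `binom(t, s) ≤ t - s + 2`. For `s < t` this forces
`s = 2` and `t = 3`; for `s = t` the condition reads `∏ n_i = min n_i + 1`.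
-/

open Finset

/-- The vertex set `V = V_1 ∪ ⋯ ∪ V_t` of the multipartite hypergraph with sides `Vs`. -/
def vertexSet {α : Type*} [DecidableEq α] {t : ℕ} (Vs : Fin t → Finset α) : Finset α :=
  Finset.univ.biUnion Vs

/-- `e` is an edge of the complete `s`-uniform `t`-partite hypergraph with sides `Vs`:
`e ⊆ V`, `|e| = s`, and `|e ∩ V_i| ≤ 1` for every side. -/
def IsEdge {α : Type*} [DecidableEq α] {t : ℕ} (Vs : Fin t → Finset α) (s : ℕ)
    (e : Finset α) : Prop :=
  e ⊆ vertexSet Vs ∧ e.card = s ∧ ∀ i : Fin t, (e ∩ Vs i).card ≤ 1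

/-- `F` is an independent set: a subset of `V` containing no edge. -/
def Indep {α : Type*} [DecidableEq α] {t : ℕ} (Vs : Fin t → Finset α) (s : ℕ)
    (F : Finset α) : Prop :=
  F ⊆ vertexSet Vs ∧ ∀ e : Finset α, IsEdge Vs s e → ¬ e ⊆ F

/-- The edge ideal `I(H) = (∏_{v ∈ e} x_v : e ∈ E(H))` of the complete `s`-uniform
`t`-partite hypergraph, in the polynomial ring `K[x_v : v ∈ α]`. -/
noncomputable def edgeIdeal (K : Type*) [Field K] {α : Type*} [DecidableEq α] {t : ℕ}
    (Vs : Fin t → Finset α) (s : ℕ) : Ideal (MvPolynomial α K) :=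
  Ideal.span {m : MvPolynomial α K |
    ∃ e : Finset α, IsEdge Vs s e ∧ m = ∏ v ∈ e, MvPolynomial.X v}

/-- The height of an ideal: the infimum of the heights (in the prime spectrum, ordered
by inclusion) of the primes minimal over it. -/
noncomputable def idealHeight {R : Type*} [CommRing R] (I : Ideal R) : ℕ∞ :=
  ⨅ (p : PrimeSpectrum R) (_ : p.asIdeal ∈ I.minimalPrimes), Order.height p

/-- The minimal number of generators of an ideal: the least cardinality of a (finite)
generating set. -/
noncomputable def minNumGens {R : Type*} [CommRing R] (I : Ideal R) : ℕ :=
  sInf {n : ℕ | ∃ G : Finset R, G.card = n ∧ Ideal.span (G : Set R) = I}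

section Height

open MvPolynomial

lemma idealHeight_eq_height {R : Type*} [CommRing R] (I : Ideal R) :
    idealHeight I = I.height := by
  rw [Ideal.height_eq_inf_minimalPrimes]
  refine le_antisymm (le_iInf₂ fun p hp => ?_) (le_iInf₂ fun p hp => ?_)
  · refine (iInf₂_le (⟨p, hp.isPrime⟩ : PrimeSpectrum R) hp).trans ?_
    rw [← PrimeSpectrum.height_eq_orderHeight]
  · refine (iInf₂_le p.asIdeal hp).trans ?_
    rw [← PrimeSpectrum.height_eq_orderHeight]

variable {σ R : Type*} [CommRing R]

lemma X_mem_span_X_image_iff [Nontrivial R] {v : σ} {s : Set σ} :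
    (X v : MvPolynomial σ R) ∈ Ideal.span (X '' s) ↔ v ∈ s := by
  classical
  simp [mem_ideal_span_X_image, support_X, Finsupp.single_apply]

variable [IsDomain R]

lemma isPrime_span_X_image (s : Set σ) :
    (Ideal.span (X '' s : Set (MvPolynomial σ R))).IsPrime := by
  classical
  set P : Ideal (MvPolynomial σ R) := Ideal.span (X '' s)
  let kill : MvPolynomial σ R →ₐ[R] MvPolynomial σ R := aeval fun v => if v ∈ s then 0 else X v
  have mk_comp_kill : (Ideal.Quotient.mkₐ R P).comp kill = Ideal.Quotient.mkₐ R P := by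
    refine algHom_ext fun v => ?_
    by_cases hv : v ∈ s
    · have hmk : Ideal.Quotient.mk P (X v) = 0 :=
        Ideal.Quotient.eq_zero_iff_mem.2 (Ideal.subset_span (Set.mem_image_of_mem X hv))
      simp [kill, hv, hmk]
    · simp [kill, hv]
  have ker_kill : RingHom.ker kill = P := by
    refine le_antisymm (fun f hf => ?_) (Ideal.span_le.2 ?_)
    · rw [← Ideal.Quotient.eq_zero_iff_mem, ← Ideal.Quotient.mkₐ_eq_mk R, ← mk_comp_kill,
        AlgHom.comp_apply, RingHom.mem_ker.1 hf, map_zero]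
    · rintro _ ⟨v, hv, rfl⟩
      simp [kill, hv]
  exact ker_kill ▸ RingHom.ker_isPrime kill

lemma card_le_height_span_X_image (C : Finset σ) :
    (#C : ℕ∞) ≤ (Ideal.span (X '' (C : Set σ)) : Ideal (MvPolynomial σ R)).height := by
  induction C using Finset.cons_induction with
  | empty => simp
  | cons v C hv ih =>
    have : (Ideal.span (X '' (C : Set σ)) : Ideal (MvPolynomial σ R)).IsPrime :=
      isPrime_span_X_image _
    have : (Ideal.span (X '' (C.cons v hv : Set σ)) : Ideal (MvPolynomial σ R)).IsPrime :=
      isPrime_span_X_image _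
    have hlt : Ideal.span (X '' (C : Set σ)) <
        (Ideal.span (X '' (C.cons v hv : Set σ)) : Ideal (MvPolynomial σ R)) := by
      refine lt_of_le_not_ge (Ideal.span_mono (Set.image_mono (by simp))) fun hle => hv ?_
      have hXv := hle (X_mem_span_X_image_iff.2 (mem_cons_self v C))
      exact X_mem_span_X_image_iff.1 hXv
    calc ((#(C.cons v hv) : ℕ) : ℕ∞) = #C + 1 := by rw [card_cons, Nat.cast_add_one]
      _ ≤ _ := add_le_add_left ih 1
      _ ≤ _ := Ideal.height_add_one_le_of_lt_of_isPrime hlt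

lemma height_span_X_image [IsNoetherianRing R] [Finite σ] (C : Finset σ) :
    (Ideal.span (X '' (C : Set σ)) : Ideal (MvPolynomial σ R)).height = #C := by
  refine le_antisymm ?_ (card_le_height_span_X_image C)
  have hfin : (X '' (C : Set σ) : Set (MvPolynomial σ R)).Finite := C.finite_toSet.image _
  refine (Ideal.height_le_spanFinrank _ (isPrime_span_X_image _).ne_top).trans ?_
  exact_mod_cast (Submodule.spanFinrank_span_le_ncard_of_finite hfin).trans
    ((Set.ncard_image_le C.finite_toSet).trans_eq (Set.ncard_coe_finset C))

end Height

section SquarefreeMonomialIdeal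

open MvPolynomial

variable {α : Type*}

/-- `C` is a vertex cover (or transversal) of the hypergraph with edge set `E`. -/
def IsVertexCover (E : Set (Finset α)) (C : Finset α) : Prop :=
  ∀ e ∈ E, ∃ v ∈ e, v ∈ C

/-- The vertex cover number of the hypergraph with edge set `E`: the least cardinality of a finite
vertex cover, and `⊤` if there is none. -/
noncomputable def coverNumber (E : Set (Finset α)) : ℕ∞ :=
  ⨅ (C : Finset α) (_ : IsVertexCover E C), (#C : ℕ∞)

/-- The ideal of `R[x_v : v ∈ α]` generated by the squarefree monomials `∏_{v ∈ e} x_v`, `e ∈ E`: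
the edge ideal of an arbitrary hypergraph. -/
noncomputable def squarefreeMonomialIdeal (R : Type*) [CommRing R] (E : Set (Finset α)) :
    Ideal (MvPolynomial α R) :=
  Ideal.span ((fun e : Finset α => ∏ v ∈ e, X v) '' E)

variable {R : Type*} [CommRing R]

lemma squarefreeMonomialIdeal_le_iff {E : Set (Finset α)} {p : Ideal (MvPolynomial α R)}
    (hp : p.IsPrime) : squarefreeMonomialIdeal R E ≤ p ↔ ∀ e ∈ E, ∃ v ∈ e, X v ∈ p := by
  rw [squarefreeMonomialIdeal, Ideal.span_le, Set.image_subset_iff]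
  exact forall₂_congr fun e _ => hp.prod_mem_iff

theorem height_squarefreeMonomialIdeal [IsDomain R] [IsNoetherianRing R] [Finite α]
    (E : Set (Finset α)) : (squarefreeMonomialIdeal R E).height = coverNumber E := by
  refine le_antisymm (le_iInf₂ fun C hC => ?_) ?_
  · rw [← height_span_X_image (R := R) C]
    refine Ideal.height_mono ((squarefreeMonomialIdeal_le_iff (isPrime_span_X_image _)).2 ?_)
    simpa only [X_mem_span_X_image_iff, mem_coe, IsVertexCover] using hC
  · rw [Ideal.height_eq_inf_minimalPrimes]
    refine le_iInf₂ fun p hp => ?_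
    let C : Finset α := (Set.toFinite {v : α | X v ∈ p}).toFinset
    have hC : IsVertexCover E C := by
      simpa [C, IsVertexCover] using (squarefreeMonomialIdeal_le_iff hp.isPrime).1 hp.le
    have hCp : Ideal.span (X '' (C : Set α)) ≤ p := by
      rw [Ideal.span_le, Set.image_subset_iff]
      intro v hv
      simpa [C] using hv
    exact (iInf₂_le C hC).trans ((card_le_height_span_X_image C).trans (Ideal.height_mono hCp))

/-- An element of the antichain `D` has no divisor in the monomial ideal of `D` but itself, so
among the products contributing to `coeff d (a * f)` only one survives. -/
lemma coeff_mul_of_mem_span_monomial {D : Set (α →₀ ℕ)} (hD : IsAntichain (· ≤ ·) D)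
    {f : MvPolynomial α R} (hf : f ∈ Ideal.span ((fun d => monomial d (1 : R)) '' D))
    {d : α →₀ ℕ} (hd : d ∈ D) (a : MvPolynomial α R) :
    coeff d (a * f) = coeff 0 a * coeff d f := by
  classical
  rw [coeff_mul, sum_eq_single_of_mem (0, d) (by simp)]
  rintro ⟨b, c⟩ hbc hne
  rw [HasAntidiagonal.mem_antidiagonal] at hbc
  suffices hc : c ∉ f.support by rw [notMem_support_iff.1 hc, mul_zero]
  intro hc
  obtain ⟨d', hd', hd'c⟩ := mem_ideal_span_monomial_image.1 hf c hc
  have hcd : c ≤ d := hbc ▸ le_add_self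
  have hd'd : d' = d := hD.eq hd' hd (hd'c.trans hcd)
  have hc' : c = d := hcd.antisymm (hd'd ▸ hd'c)
  subst hc'
  exact hne (by simpa using hbc)

lemma card_le_card_of_span_eq_span_monomial [Nontrivial R] {D : Finset (α →₀ ℕ)}
    (hD : IsAntichain (· ≤ ·) (D : Set (α →₀ ℕ))) {G : Finset (MvPolynomial α R)}
    (hG : Ideal.span (G : Set (MvPolynomial α R)) =
      Ideal.span ((fun d => monomial d (1 : R)) '' D)) :
    #D ≤ #G := by
  classical
  let coeffs : MvPolynomial α R →ₗ[R] D → R := LinearMap.pi fun d => lcoeff R d.1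
  have coeffs_apply (f : MvPolynomial α R) (d : D) : coeffs f d = coeff d.1 f := rfl
  have coeffs_mem : ∀ f ∈ Ideal.span (G : Set (MvPolynomial α R)),
      coeffs f ∈ Submodule.span R (G.image coeffs : Set (D → R)) := by
    intro f hf
    induction hf using Submodule.span_induction with
    | mem f hf => exact Submodule.subset_span (mem_coe.2 (mem_image_of_mem coeffs hf))
    | zero => simp
    | add f g _ _ hf hg => exact map_add coeffs f g ▸ add_mem hf hg
    | smul a f hfG hf =>
      have : coeffs (a • f) = coeff 0 a • coeffs f :=
        funext fun d => coeff_mul_of_mem_span_monomial hD (hG ▸ hfG) d.2 a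
      exact this ▸ Submodule.smul_mem _ _ hf
  have span_coeffs : Submodule.span R (G.image coeffs : Set (D → R)) = ⊤ := by
    rw [eq_top_iff, ← (Pi.basisFun R D).span_eq, Submodule.span_le]
    rintro _ ⟨d, rfl⟩
    have hd : coeffs (monomial d.1 1) = Pi.basisFun R D d := by
      ext d'
      rw [coeffs_apply, coeff_monomial, Pi.basisFun_apply, Pi.single_apply]
      simp only [Subtype.ext_iff, eq_comm]
    exact hd ▸ coeffs_mem _ (hG ▸ Ideal.subset_span (Set.mem_image_of_mem _ d.2))
  calc #D = (G.image coeffs : Set (D → R)).finrank R := by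
        rw [Set.finrank, span_coeffs, finrank_top, Module.finrank_fintype_fun_eq_card,
          Fintype.card_coe]
    _ ≤ #(G.image coeffs) := finrank_span_finset_le_card _
    _ ≤ #G := card_image_le

theorem minNumGens_span_monomial [Nontrivial R] {D : Finset (α →₀ ℕ)}
    (hD : IsAntichain (· ≤ ·) (D : Set (α →₀ ℕ))) :
    minNumGens (Ideal.span ((fun d => monomial d (1 : R)) '' (D : Set (α →₀ ℕ)))) = #D := by
  classical
  have hmem : #D ∈ {n : ℕ | ∃ G : Finset (MvPolynomial α R), #G = n ∧
      Ideal.span (G : Set (MvPolynomial α R)) =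
        Ideal.span ((fun d => monomial d (1 : R)) '' (D : Set (α →₀ ℕ)))} :=
    ⟨D.image fun d => monomial d 1,
      card_image_of_injective _ (monomial_left_injective one_ne_zero), by rw [coe_image]⟩
  refine le_antisymm (Nat.sInf_le hmem) (le_csInf ⟨_, hmem⟩ ?_)
  rintro _ ⟨G, rfl, hG⟩
  exact card_le_card_of_span_eq_span_monomial hD hG

lemma prod_X_eq_monomial [DecidableEq α] (e : Finset α) :
    (∏ v ∈ e, X v : MvPolynomial α R) = monomial (Multiset.toFinsupp e.val) 1 := by
  have : Multiset.toFinsupp e.val = ∑ v ∈ e, Finsupp.single v 1 := by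
    simp_rw [← Multiset.toFinsupp_singleton, ← map_sum, sum_multiset_singleton]
  rw [this, monomial_sum_one]
  rfl

theorem minNumGens_squarefreeMonomialIdeal [Nontrivial R] {E : Finset (Finset α)}
    (hE : IsAntichain (· ⊆ ·) (E : Set (Finset α))) :
    minNumGens (squarefreeMonomialIdeal R (E : Set (Finset α))) = #E := by
  classical
  let exponent : Finset α → α →₀ ℕ := fun e => Multiset.toFinsupp e.val
  have exponent_le {e f : Finset α} : exponent e ≤ exponent f ↔ e ⊆ f :=
    Finsupp.orderIsoMultiset.symm.le_iff_le.trans val_le_iff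
  have exponent_inj : Function.Injective exponent :=
    Multiset.toFinsupp.injective.comp val_injective
  have hD : IsAntichain (· ≤ ·) (E.image exponent : Set (α →₀ ℕ)) := by
    rw [coe_image]
    rintro _ ⟨e, he, rfl⟩ _ ⟨f, hf, rfl⟩ hef hle
    exact hE he hf (fun h => hef (congrArg exponent h)) (exponent_le.1 hle)
  have hspan : squarefreeMonomialIdeal R (E : Set (Finset α)) =
      Ideal.span ((fun d => monomial d (1 : R)) '' (E.image exponent : Set (α →₀ ℕ))) := by
    simp only [squarefreeMonomialIdeal, prod_X_eq_monomial, coe_image, Set.image_image, exponent]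
  rw [hspan, minNumGens_span_monomial hD, card_image_of_injective _ exponent_inj]

end SquarefreeMonomialIdeal

section Minimum

variable {ι : Type*} {n : ι → ℕ} {k s : ℕ}

/-- The least sum of `k` of the numbers `n i`, at distinct indices; it is `⊤` if there are fewer
than `k` indices. -/
noncomputable def minSum (n : ι → ℕ) (k : ℕ) : ℕ∞ :=
  ⨅ (T : Finset ι) (_ : #T = k), ((∑ i ∈ T, n i : ℕ) : ℕ∞)

lemma minSum_le_sum {T : Finset ι} (hT : #T = k) : minSum n k ≤ ((∑ i ∈ T, n i : ℕ) : ℕ∞) :=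
  iInf₂_le T hT

lemma le_minSum (hn : ∀ i, 1 ≤ n i) : (k : ℕ∞) ≤ minSum n k := by
  refine le_iInf₂ fun T hT => ?_
  rw [← hT, Nat.cast_le, card_eq_sum_ones]
  exact sum_le_sum fun i _ => hn i

lemma minSum_eq_of_forall_mem_eq_one (hn : ∀ i, 1 ≤ n i) {T : Finset ι} (hT : #T = k)
    (h : ∀ i ∈ T, n i = 1) : minSum n k = k := by
  refine le_antisymm ((minSum_le_sum hT).trans ?_) (le_minSum hn)
  rw [sum_congr rfl h, ← card_eq_sum_ones, hT]

variable [Fintype ι]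

/-- Among the `s`-subsets of `ι`, the sets `Tᶜ ∪ {i}` with `i ∈ T` contribute the first sum, and
each of the others contributes at least `1`. -/
lemma sum_mul_prod_compl_add_choose_le [DecidableEq ι] (hn : ∀ i, 1 ≤ n i) {T : Finset ι}
    (hT : #T + s = Fintype.card ι + 1) :
    (∑ i ∈ T, n i * ∏ j ∈ Tᶜ, n j) + (Fintype.card ι).choose s ≤
      (∑ S ∈ powersetCard s univ, ∏ i ∈ S, n i) + #T := by
  have prod_pos (S : Finset ι) : 1 ≤ ∏ i ∈ S, n i := one_le_prod' fun i _ => hn i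
  have excess_le : ∑ i ∈ T, (n i * ∏ j ∈ Tᶜ, n j - 1) ≤
      ∑ S ∈ powersetCard s univ, (∏ i ∈ S, n i - 1) := by
    have insert_inj : Set.InjOn (fun i => insert i Tᶜ) T := by
      simpa only [coe_compl, compl_compl] using insert_inj_on Tᶜ
    have image_subset : T.image (fun i => insert i Tᶜ) ⊆ powersetCard s univ := by
      refine image_subset_iff.2 fun i hi => mem_powersetCard.2 ⟨subset_univ _, ?_⟩
      have := card_le_univ T
      rw [card_insert_of_notMem (notMem_compl.2 hi), card_compl]
      omega
    calc ∑ i ∈ T, (n i * ∏ j ∈ Tᶜ, n j - 1)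
        = ∑ i ∈ T, (∏ j ∈ insert i Tᶜ, n j - 1) :=
          sum_congr rfl fun i hi => by rw [prod_insert (notMem_compl.2 hi)]
      _ = ∑ S ∈ T.image (fun i => insert i Tᶜ), (∏ i ∈ S, n i - 1) :=
          (sum_image (f := fun S => ∏ i ∈ S, n i - 1) insert_inj).symm
      _ ≤ _ := sum_le_sum_of_subset image_subset
  have sum_T : ∑ i ∈ T, n i * ∏ j ∈ Tᶜ, n j = ∑ i ∈ T, (n i * ∏ j ∈ Tᶜ, n j - 1) + #T := by
    rw [card_eq_sum_ones, ← sum_add_distrib]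
    exact sum_congr rfl fun i _ => (Nat.sub_add_cancel (Nat.mul_pos (hn i) (prod_pos _))).symm
  have sum_S : ∑ S ∈ powersetCard s univ, ∏ i ∈ S, n i =
      ∑ S ∈ powersetCard s univ, (∏ i ∈ S, n i - 1) + (Fintype.card ι).choose s := by
    rw [← card_univ, ← card_powersetCard, card_eq_sum_ones, ← sum_add_distrib]
    exact sum_congr rfl fun S _ => (Nat.sub_add_cancel (prod_pos S)).symm
  omega

lemma eq_two_and_eq_three_of_choose_add_le {t : ℕ} (hs : 2 ≤ s) (hst : s < t)
    (h : t.choose s + s ≤ t + 2) : s = 2 ∧ t = 3 := by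
  obtain ⟨k, rfl⟩ := Nat.exists_eq_add_of_lt hst
  have choose_le : (k + 3).choose 2 ≤ k + 3 := by
    calc (k + 3).choose 2 = (2 + (k + 1)).choose (k + 1) := by
          rw [← Nat.choose_symm_add]; congr 1; omega
      _ ≤ (s + (k + 1)).choose (k + 1) := Nat.choose_le_choose _ (by omega)
      _ = (s + k + 1).choose s := by rw [← Nat.choose_symm_add, add_assoc]
      _ ≤ k + 3 := by omega
  have hk : k = 0 := by
    have h₁ : (k + 3).choose 2 = (k + 2) + (k + 2).choose 2 := by
      rw [Nat.choose_succ_succ' (k + 2) 1, Nat.choose_one_right]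
    have h₂ : (k + 2).choose 2 = (k + 1) + (k + 1).choose 2 := by
      rw [Nat.choose_succ_succ' (k + 1) 1, Nat.choose_one_right]
    omega
  subst hk
  rw [add_zero, Nat.choose_succ_self_right] at h
  omega

lemma eq_one_of_sum_prod_le (hn : ∀ i, 1 ≤ n i) (hs : 2 ≤ s)
    (hst : s < Fintype.card ι)
    (h : ∀ T : Finset ι, #T + s = Fintype.card ι + 1 →
      ∑ S ∈ powersetCard s univ, ∏ i ∈ S, n i ≤ (∑ i ∈ T, n i) + 1) :
    s = 2 ∧ Fintype.card ι = 3 ∧ ∀ i, n i = 1 := by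
  classical
  have bound (T : Finset ι) (hT : #T + s = Fintype.card ι + 1) :
      (∑ i ∈ T, n i) * ∏ j ∈ Tᶜ, n j + (Fintype.card ι).choose s ≤ ∑ i ∈ T, n i + 1 + #T := by
    rw [sum_mul]
    exact (sum_mul_prod_compl_add_choose_le hn hT).trans (Nat.add_le_add_right (h T hT) _)
  have one_le_prod (T : Finset ι) : 1 ≤ ∏ j ∈ T, n j := one_le_prod' fun i _ => hn i
  obtain ⟨rfl, hι⟩ : s = 2 ∧ Fintype.card ι = 3 := by
    obtain ⟨T, -, hT⟩ := exists_subset_card_eq (s := (univ : Finset ι))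
      (n := Fintype.card ι + 1 - s) (by rw [card_univ]; omega)
    have hbound := bound T (by omega)
    have := Nat.le_mul_of_pos_right (∑ i ∈ T, n i) (one_le_prod Tᶜ)
    exact eq_two_and_eq_three_of_choose_add_le hs hst (by omega)
  refine ⟨rfl, hι, fun i => le_antisymm ?_ (hn i)⟩
  have hcard : #({i}ᶜ : Finset ι) = 2 := by rw [card_compl, card_singleton, hι]
  have hbound := bound {i}ᶜ (by omega)
  rw [compl_compl, prod_singleton, hι, hcard, show Nat.choose 3 2 = 3 from rfl] at hbound
  have sum_pos : 0 < ∑ j ∈ {i}ᶜ, n j :=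
    sum_pos (fun j _ => hn j) (card_pos.1 (by omega))
  exact Nat.le_of_mul_le_mul_left (by omega) sum_pos

lemma exists_eq_two_of_prod_le [Nontrivial ι] (hn : ∀ i, 1 ≤ n i) (hprod : 2 ≤ ∏ i, n i)
    (h : ∀ i, ∏ j, n j ≤ n i + 1) : ∃ j, n j = 2 ∧ ∀ i, i ≠ j → n i = 1 := by
  classical
  obtain ⟨j, hj⟩ : ∃ j, 2 ≤ n j := by
    by_contra! hlt
    have : ∏ i, n i = 1 := prod_eq_one fun i _ => by have := hn i; have := hlt i; omega
    omega
  have eq_one_and_eq_two (i : ι) (hij : i ≠ j) : n i = 1 ∧ n j = 2 := by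
    have hmul : n i * n j ≤ n i + 1 := by
      rw [← prod_pair hij]
      exact (prod_le_univ_prod_of_one_le' hn).trans (h i)
    have := hn i
    constructor <;> nlinarith
  obtain ⟨i, hij⟩ := exists_ne j
  exact ⟨j, (eq_one_and_eq_two i hij).2, fun i hij => (eq_one_and_eq_two i hij).1⟩

theorem sum_prod_eq_minSum_add_one_iff (hn : ∀ i, 1 ≤ n i) (hs : 2 ≤ s)
    (hst : s ≤ Fintype.card ι) :
    ((∑ S ∈ powersetCard s univ, ∏ i ∈ S, n i : ℕ) : ℕ∞) =
        minSum n (Fintype.card ι + 1 - s) + 1 ↔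
      (s = 2 ∧ Fintype.card ι = 3 ∧ ∀ i, n i = 1) ∨
        (s = Fintype.card ι ∧ ∃ j, n j = 2 ∧ ∀ i, i ≠ j → n i = 1) := by
  classical
  have : Nontrivial ι := Fintype.one_lt_card_iff_nontrivial.1 (by omega)
  constructor
  · intro h
    have sum_prod_le (T : Finset ι) (hT : #T + s = Fintype.card ι + 1) :
        ∑ S ∈ powersetCard s univ, ∏ i ∈ S, n i ≤ (∑ i ∈ T, n i) + 1 := by
      rw [← Nat.cast_le (α := ℕ∞), h, Nat.cast_add_one]
      exact add_le_add_left (minSum_le_sum (by omega)) 1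
    rcases hst.lt_or_eq with hlt | rfl
    · exact Or.inl (eq_one_of_sum_prod_le hn hs hlt sum_prod_le)
    · rw [Nat.add_sub_cancel_left] at h
      simp only [← card_univ (α := ι), powersetCard_self, sum_singleton] at h sum_prod_le
      refine Or.inr ⟨rfl, exists_eq_two_of_prod_le hn ?_ fun i => ?_⟩
      · rw [← Nat.cast_le (α := ℕ∞), h]
        exact add_le_add_left (le_minSum hn) 1
      · simpa using sum_prod_le {i} (by rw [card_singleton, add_comm])
  · rintro (⟨rfl, hι, h1⟩ | ⟨rfl, j, hj, h1⟩)
    · obtain ⟨T, -, hT⟩ := exists_subset_card_eq (s := (univ : Finset ι)) (n := 2)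
        (by rw [card_univ]; omega)
      rw [hι, minSum_eq_of_forall_mem_eq_one hn hT fun i _ => h1 i]
      simp only [h1, prod_const_one, sum_const, card_powersetCard, card_univ, hι]
      rfl
    · obtain ⟨i, hij⟩ := exists_ne j
      have prod_eq : ∏ i, n i = 2 := by
        rw [prod_eq_single j (fun i _ => h1 i) (by simp), hj]
      rw [Nat.add_sub_cancel_left, ← card_univ, powersetCard_self, sum_singleton, prod_eq,
        minSum_eq_of_forall_mem_eq_one hn (card_singleton i) (by simpa using h1 i hij)]
      rfl

end Minimum

section CompleteMultipartite

lemma card_filter_card_inter_eq {ι α : Type*} [Fintype ι] [DecidableEq α] {V : ι → Finset α}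
    (hV : Pairwise fun i j => Disjoint (V i) (V j)) (k : ι → ℕ) :
    #{e ∈ (univ.biUnion V).powerset | ∀ i, #(e ∩ V i) = k i} = ∏ i, (#(V i)).choose (k i) := by
  classical
  have biUnion_inter {g : ι → Finset α} (hg : ∀ i, g i ⊆ V i) (i : ι) :
      univ.biUnion g ∩ V i = g i := by
    ext v
    simp only [mem_inter, mem_biUnion, mem_univ, true_and]
    refine ⟨fun ⟨⟨j, hj⟩, hi⟩ => ?_, fun hv => ⟨⟨i, hv⟩, hg i hv⟩⟩
    by_contra hv
    have hij : i ≠ j := fun h => hv (h ▸ hj)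
    exact disjoint_left.1 (hV hij) hi (hg j hj)
  have mem_pi {g : ι → Finset α} :
      g ∈ Fintype.piFinset (fun i => powersetCard (k i) (V i)) ↔
        ∀ i, g i ⊆ V i ∧ #(g i) = k i := by
    simp only [Fintype.mem_piFinset, mem_powersetCard]
  calc _ = #(Fintype.piFinset fun i => powersetCard (k i) (V i)) := by
        refine card_nbij' (fun e i => e ∩ V i) (fun g => univ.biUnion g) ?_ ?_ ?_ ?_
        · intro e he
          exact mem_pi.2 fun i => ⟨inter_subset_right, (mem_filter.1 he).2 i⟩
        · intro g hg
          have hg := mem_pi.1 hg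
          refine mem_filter.2 ⟨mem_powerset.2 (biUnion_mono fun i _ => (hg i).1), fun i => ?_⟩
          rw [biUnion_inter (fun i => (hg i).1), (hg i).2]
        · intro e he
          have he := mem_powerset.1 (mem_filter.1 he).1
          simp only [← inter_biUnion, inter_eq_left.2 he]
        · intro g hg
          exact funext (biUnion_inter fun i => (mem_pi.1 hg i).1)
    _ = _ := by simp only [Fintype.card_piFinset, card_powersetCard]

variable {α : Type*} [DecidableEq α] {t s : ℕ} {Vs : Fin t → Finset α}

/-- The edge set of the complete `s`-uniform `t`-partite hypergraph with sides `Vs`, as a finset. -/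
def edgeFinset (Vs : Fin t → Finset α) (s : ℕ) : Finset (Finset α) :=
  {e ∈ (vertexSet Vs).powerset | #e = s ∧ ∀ i, #(e ∩ Vs i) ≤ 1}

lemma mem_edgeFinset {e : Finset α} : e ∈ edgeFinset Vs s ↔ IsEdge Vs s e := by
  rw [edgeFinset, mem_filter, mem_powerset, IsEdge]

lemma edgeIdeal_eq_squarefreeMonomialIdeal (K : Type*) [Field K] :
    edgeIdeal K Vs s = squarefreeMonomialIdeal K (edgeFinset Vs s : Set (Finset α)) := by
  simp only [edgeIdeal, squarefreeMonomialIdeal, Set.image, mem_coe, mem_edgeFinset, eq_comm]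

lemma isAntichain_edgeFinset : IsAntichain (· ⊆ ·) (edgeFinset Vs s : Set (Finset α)) :=
  Set.Sized.isAntichain fun _ he => (mem_edgeFinset.1 he).2.1

lemma card_eq_sum_card_inter (hV : Pairwise fun i j => Disjoint (Vs i) (Vs j)) {e : Finset α}
    (he : e ⊆ vertexSet Vs) : #e = ∑ i, #(e ∩ Vs i) := by
  rw [← card_biUnion fun i _ j _ hij => (hV hij).mono inter_subset_right inter_subset_right,
    ← inter_biUnion, ← vertexSet, inter_eq_left.2 he]

/-- The set of (indices of) sides that `e` meets, by which the edges are counted. -/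
def metSides (Vs : Fin t → Finset α) (e : Finset α) : Finset (Fin t) :=
  {i | (e ∩ Vs i).Nonempty}

lemma card_inter_eq_ite_iff {e : Finset α} :
    (∀ i, #(e ∩ Vs i) = if i ∈ metSides Vs e then 1 else 0) ↔ ∀ i, #(e ∩ Vs i) ≤ 1 := by
  refine forall_congr' fun i => ?_
  simp only [metSides, mem_filter_univ, ← card_pos]
  split_ifs <;> omega

lemma card_metSides (hV : Pairwise fun i j => Disjoint (Vs i) (Vs j)) {e : Finset α}
    (he : e ⊆ vertexSet Vs) (hle : ∀ i, #(e ∩ Vs i) ≤ 1) : #(metSides Vs e) = #e := by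
  rw [card_eq_sum_card_inter hV he, sum_congr rfl fun i _ => card_inter_eq_ite_iff.2 hle i,
    sum_boole, filter_univ_mem, Nat.cast_id]

lemma metSides_eq_of_card_inter_eq_ite {e : Finset α} {S : Finset (Fin t)}
    (h : ∀ i, #(e ∩ Vs i) = if i ∈ S then 1 else 0) : metSides Vs e = S := by
  ext i
  rw [metSides, mem_filter_univ, ← card_pos, h]
  split_ifs with hi <;> simp [hi]

lemma isEdge_and_metSides_eq_iff (hV : Pairwise fun i j => Disjoint (Vs i) (Vs j))
    {e : Finset α} {S : Finset (Fin t)} :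
    IsEdge Vs #S e ∧ metSides Vs e = S ↔
      e ⊆ vertexSet Vs ∧ ∀ i, #(e ∩ Vs i) = if i ∈ S then 1 else 0 := by
  constructor
  · rintro ⟨⟨he, -, hle⟩, rfl⟩
    exact ⟨he, card_inter_eq_ite_iff.2 hle⟩
  · rintro ⟨he, hcard⟩
    obtain rfl := metSides_eq_of_card_inter_eq_ite hcard
    have hle := card_inter_eq_ite_iff.1 hcard
    exact ⟨⟨he, (card_metSides hV he hle).symm, hle⟩, rfl⟩

theorem card_edgeFinset (hV : Pairwise fun i j => Disjoint (Vs i) (Vs j)) :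
    #(edgeFinset Vs s) = ∑ S ∈ powersetCard s univ, ∏ i ∈ S, #(Vs i) := by
  have metSides_mem : ∀ e ∈ edgeFinset Vs s, metSides Vs e ∈ powersetCard s univ := by
    intro e he
    obtain ⟨hsub, hcard, hle⟩ := mem_edgeFinset.1 he
    rw [mem_powersetCard_univ, card_metSides hV hsub hle, hcard]
  rw [card_eq_sum_card_fiberwise metSides_mem]
  refine sum_congr rfl fun S hS => ?_
  obtain rfl := mem_powersetCard_univ.1 hS
  calc #{e ∈ edgeFinset Vs #S | metSides Vs e = S}
      = #{e ∈ (vertexSet Vs).powerset | ∀ i, #(e ∩ Vs i) = if i ∈ S then 1 else 0} := by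
        congr 1
        ext e
        rw [mem_filter, mem_filter, mem_powerset, mem_edgeFinset, isEdge_and_metSides_eq_iff hV]
    _ = ∏ i, (#(Vs i)).choose (if i ∈ S then 1 else 0) := by
        convert card_filter_card_inter_eq hV fun i => if i ∈ S then 1 else 0
        rfl
    _ = ∏ i, if i ∈ S then #(Vs i) else 1 := by
        refine prod_congr rfl fun i _ => ?_
        split_ifs <;> simp
    _ = ∏ i ∈ S, #(Vs i) := by rw [prod_ite_mem, univ_inter]

lemma isVertexCover_biUnion {T : Finset (Fin t)} (hT : t < #T + s) :
    IsVertexCover (edgeFinset Vs s : Set (Finset α)) (T.biUnion Vs) := by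
  intro e he
  obtain ⟨hsub, hcard, hle⟩ := mem_edgeFinset.1 he
  by_contra! hdisj
  have he_eq : e ⊆ Tᶜ.biUnion fun i => e ∩ Vs i := by
    intro v hv
    obtain ⟨i, -, hvi⟩ := mem_biUnion.1 (hsub hv)
    have hi : i ∉ T := fun hi => hdisj v hv (mem_biUnion.2 ⟨i, hi, hvi⟩)
    exact mem_biUnion.2 ⟨i, mem_compl.2 hi, mem_inter.2 ⟨hv, hvi⟩⟩
  have hcard_le : #e ≤ #Tᶜ * 1 :=
    (card_le_card he_eq).trans (card_biUnion_le_card_mul _ _ 1 fun i _ => hle i)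
  rw [card_compl, Fintype.card_fin] at hcard_le
  have := card_finset_fin_le T
  omega

lemma isEdge_image (hV : Pairwise fun i j => Disjoint (Vs i) (Vs j)) {g : Fin t → α}
    (hg : ∀ i, g i ∈ Vs i) (S : Finset (Fin t)) : IsEdge Vs #S (S.image g) := by
  have eq_of_mem {i j : Fin t} (h : g i ∈ Vs j) : i = j := by
    by_contra hij
    exact disjoint_left.1 (hV hij) (hg i) h
  have g_inj : Function.Injective g := fun i j hij => eq_of_mem (hij ▸ hg j)
  refine ⟨image_subset_iff.2 fun i _ => mem_biUnion.2 ⟨i, mem_univ i, hg i⟩,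
    card_image_of_injective S g_inj, fun j => ?_⟩
  have : S.image g ∩ Vs j ⊆ {g j} := by
    intro v hv
    obtain ⟨hvS, hvj⟩ := mem_inter.1 hv
    obtain ⟨i, -, rfl⟩ := mem_image.1 hvS
    rw [eq_of_mem hvj, mem_singleton]
  exact card_le_card this

lemma exists_biUnion_subset_of_isVertexCover (hst : s ≤ t)
    (hV : Pairwise fun i j => Disjoint (Vs i) (Vs j)) (hne : ∀ i, (Vs i).Nonempty)
    {C : Finset α} (hC : IsVertexCover (edgeFinset Vs s : Set (Finset α)) C) :
    ∃ T : Finset (Fin t), #T = t + 1 - s ∧ T.biUnion Vs ⊆ C := by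
  let full : Finset (Fin t) := {i | Vs i ⊆ C}
  suffices hfull : t + 1 - s ≤ #full by
    obtain ⟨T, hTfull, hT⟩ := exists_subset_card_eq hfull
    exact ⟨T, hT, biUnion_subset.2 fun i hi => (mem_filter.1 (hTfull hi)).2⟩
  by_contra! hlt
  obtain ⟨S, hS, rfl⟩ : ∃ S ⊆ fullᶜ, #S = s :=
    exists_subset_card_eq (by rw [card_compl, Fintype.card_fin]; omega)
  have exists_rep (i : Fin t) : ∃ v ∈ Vs i, i ∈ S → v ∉ C := by
    by_cases hi : i ∈ S
    · have hnot : ¬ Vs i ⊆ C := by simpa [full] using hS hi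
      obtain ⟨v, hv, hvC⟩ := not_subset.1 hnot
      exact ⟨v, hv, fun _ => hvC⟩
    · exact (hne i).imp fun v hv => ⟨hv, fun h => absurd h hi⟩
  choose g hg hgC using exists_rep
  obtain ⟨v, hv, hvC⟩ := hC _ (mem_edgeFinset.2 (isEdge_image hV hg S))
  obtain ⟨i, hi, rfl⟩ := mem_image.1 hv
  exact hgC i hi hvC

theorem coverNumber_edgeFinset (hst : s ≤ t)
    (hV : Pairwise fun i j => Disjoint (Vs i) (Vs j)) (hne : ∀ i, (Vs i).Nonempty) :
    coverNumber (edgeFinset Vs s : Set (Finset α)) = minSum (fun i => #(Vs i)) (t + 1 - s) := by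
  have card_biUnion_sides (T : Finset (Fin t)) : #(T.biUnion Vs) = ∑ i ∈ T, #(Vs i) :=
    card_biUnion fun i _ j _ hij => hV hij
  refine le_antisymm (le_iInf₂ fun T hT => ?_) (le_iInf₂ fun C hC => ?_)
  · rw [← card_biUnion_sides]
    exact iInf₂_le (T.biUnion Vs) (isVertexCover_biUnion (by omega))
  · obtain ⟨T, hT, hTC⟩ := exists_biUnion_subset_of_isVertexCover hst hV hne hC
    refine (minSum_le_sum hT).trans ?_
    rw [← card_biUnion_sides]
    exact_mod_cast card_le_card hTC

end CompleteMultipartite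

theorem almost_complete_intersection_iff_general
    (K : Type*) [Field K] {α : Type*} [DecidableEq α] [Finite α] {t s : ℕ}
    (hs : 2 ≤ s) (hst : s ≤ t)
    (Vs : Fin t → Finset α)
    (hdisj : ∀ i j : Fin t, i ≠ j → Disjoint (Vs i) (Vs j))
    (hne : ∀ i : Fin t, (Vs i).Nonempty) :
    (minNumGens (edgeIdeal K Vs s) : ℕ∞) = idealHeight (edgeIdeal K Vs s) + 1 ↔
      ((s = 2 ∧ t = 3 ∧ ∀ i : Fin t, (Vs i).card = 1) ∨
        (s = t ∧ ∃ j : Fin t, (Vs j).card = 2 ∧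
          ∀ i : Fin t, i ≠ j → (Vs i).card = 1)) := by
  have hV : Pairwise fun i j => Disjoint (Vs i) (Vs j) := fun i j => hdisj i j
  have minNumGens_eq : minNumGens (edgeIdeal K Vs s) =
      ∑ S ∈ powersetCard s univ, ∏ i ∈ S, #(Vs i) := by
    rw [edgeIdeal_eq_squarefreeMonomialIdeal,
      minNumGens_squarefreeMonomialIdeal isAntichain_edgeFinset, card_edgeFinset hV]
  have idealHeight_eq : idealHeight (edgeIdeal K Vs s) =
      minSum (fun i => #(Vs i)) (t + 1 - s) := by
    rw [idealHeight_eq_height, edgeIdeal_eq_squarefreeMonomialIdeal,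
      height_squarefreeMonomialIdeal, coverNumber_edgeFinset hst hV hne]
  rw [minNumGens_eq, idealHeight_eq]
  simpa only [Fintype.card_fin] using
    sum_prod_eq_minSum_add_one_iff (fun i => (hne i).card_pos) hs (by rwa [Fintype.card_fin])

/-- `R/I(H)` is an almost complete intersection — the minimal number
of generators of the edge ideal equals its height plus one — if and only if either
(a) `s = 2`, `t = 3` and every side is a singleton (`H` is the `3`-cycle), or
(b) `s = t`, exactly one side has two vertices and all the other `t - 1` sides are
singletons (`H` has exactly two edges). -/
theorem almost_complete_intersection_iff
    (K : Type*) [Field K] {α : Type*} [DecidableEq α] [Fintype α] {t s : ℕ}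
    (hs : 2 ≤ s) (hst : s ≤ t)
    (Vs : Fin t → Finset α)
    (hdisj : ∀ i j : Fin t, i ≠ j → Disjoint (Vs i) (Vs j))
    (hne : ∀ i : Fin t, (Vs i).Nonempty)
    (huniv : vertexSet Vs = Finset.univ) :
    (minNumGens (edgeIdeal K Vs s) : ℕ∞) = idealHeight (edgeIdeal K Vs s) + 1 ↔
      ((s = 2 ∧ t = 3 ∧ ∀ i : Fin t, (Vs i).card = 1) ∨
        (s = t ∧ ∃ j : Fin t, (Vs j).card = 2 ∧
          ∀ i : Fin t, i ≠ j → (Vs i).card = 1)) :=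
  almost_complete_intersection_iff_general K hs hst Vs hdisj hne
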